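/- arXiv:math/0404557 — 4 statements merged into one kernel-verified Lean document; each statement's English description precedes it below -/
import Mathlib

section
/- Let x and y be intertwiners for θ (i.e. θ(a) ∘ x = x ∘ a and θ(a) ∘ y = y ∘ a for all a ∈ B(H)). Then there exists a scalar c ∈ ℂ such that x* ∘ y = c • id_H, where x* denotes the Hilbert-space adjoint of x. (In other words, the adjoint-composition of two intertwiners lies in the commutant ℂ·1 of B(H).) -/
open ContinuousLinearMap

/-!
Taking adjoints in `θ(a*) x = x a*` gives `x* θ(a) = a x*`, so `T = x* y` commutes with every
`a ∈ B(H)`. Comparing `T a e` with `a T e` for the rank-one operators `a = ⟨e, ·⟩ v`, where `e ≠ 0`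
is fixed, gives `⟨e, e⟩ T v = ⟨e, T e⟩ v` for all `v`, so `T` is scalar.
-/

/-- If `x` and `y` are intertwiners for a unital star-algebra homomorphism
`θ : B(H) → B(K)`, then `x* ∘ y` is a scalar multiple of the identity on `H`. -/
theorem intertwiner_adjoint_comp_scalar
    {H K : Type*} [NormedAddCommGroup H] [InnerProductSpace ℂ H] [CompleteSpace H]
    [NormedAddCommGroup K] [InnerProductSpace ℂ K] [CompleteSpace K]
    (θ : (H →L[ℂ] H) →⋆ₐ[ℂ] (K →L[ℂ] K))
    (x y : H →L[ℂ] K)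
    (hx : ∀ a : H →L[ℂ] H, (θ a).comp x = x.comp a)
    (hy : ∀ a : H →L[ℂ] H, (θ a).comp y = y.comp a) :
    ∃ c : ℂ, (ContinuousLinearMap.adjoint x).comp y = c • ContinuousLinearMap.id ℂ H := by
  have hx' : ∀ a : H →L[ℂ] H, (adjoint x).comp (θ a) = a.comp (adjoint x) := by
    intro a
    have h := congrArg adjoint (hx (star a))
    rwa [adjoint_comp, adjoint_comp, map_star, star_eq_adjoint, star_eq_adjoint,
      adjoint_adjoint, adjoint_adjoint] at h
  have hcomm : ∀ a : H →L[ℂ] H,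
      ((adjoint x).comp y).comp a = a.comp ((adjoint x).comp y) := by
    intro a
    rw [comp_assoc, ← hy a, ← comp_assoc, hx' a, comp_assoc]
  rcases subsingleton_or_nontrivial H with hH | hH
  · exact ⟨0, ContinuousLinearMap.ext fun v => Subsingleton.elim _ _⟩
  obtain ⟨e, he⟩ := exists_ne (0 : H)
  generalize (adjoint x).comp y = T at hcomm ⊢
  have hee : inner ℂ e e ≠ 0 := inner_self_ne_zero.mpr he
  refine ⟨(inner ℂ e e)⁻¹ * inner ℂ e (T e), ContinuousLinearMap.ext fun v => ?_⟩
  have h : inner ℂ e e • T v = inner ℂ e (T e) • v := by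
    simpa only [comp_apply, smulRight_apply, innerSL_apply_apply, map_smul] using
      DFunLike.congr_fun (hcomm ((innerSL ℂ e).smulRight v)) e
  rw [smul_apply, id_apply, mul_smul, ← h, inv_smul_smul₀ hee]
end

section
/- Let x be an intertwiner for θ. Then x* ∘ x = ‖x‖² • id_H, where ‖x‖ is the operator norm of x and x* is its adjoint. In particular the unique scalar c with x* ∘ x = c • id_H (for H ≠ {0}) is real and nonnegative. -/
/-!
The operator `T = x* ∘ x` commutes with every `a ∈ B(H)`, since
`x* x a = x* θ(a) x = (θ(a*) x)* x = (x a*)* x = a x* x`. Applying this to the rank-one operators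
`w ↦ ⟪v, w⟫ u` with `v` a fixed unit vector gives `T u = ⟪v, T v⟫ u = ‖x v‖² u` for all `u`, so `T`
is a nonnegative scalar. The C*-identity `‖x* ∘ x‖ = ‖x‖²` identifies that scalar.
-/

open ContinuousLinearMap in
theorem adjoint_comp_self_commute_of_intertwiner
    {H K : Type*} [NormedAddCommGroup H] [InnerProductSpace ℂ H] [CompleteSpace H]
    [NormedAddCommGroup K] [InnerProductSpace ℂ K] [CompleteSpace K]
    (θ : (H →L[ℂ] H) →⋆ₐ[ℂ] (K →L[ℂ] K)) (x : H →L[ℂ] K)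
    (hx : ∀ a : H →L[ℂ] H, (θ a).comp x = x.comp a) (a : H →L[ℂ] H) :
    ((adjoint x).comp x).comp a = a.comp ((adjoint x).comp x) := by
  have h : (adjoint x).comp (θ a) = a.comp (adjoint x) := by
    have h1 := congrArg adjoint (hx (star a))
    rw [map_star, adjoint_comp, adjoint_comp, star_eq_adjoint, star_eq_adjoint,
      adjoint_adjoint, adjoint_adjoint] at h1
    exact h1
  rw [comp_assoc, ← hx a, ← comp_assoc, h, comp_assoc]

/-- For an intertwiner `x` of a unital star-algebra homomorphism
`θ : B(H) → B(K)` one has `x* ∘ x = ‖x‖² • id_H`; in particular the scalar is a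
nonnegative real number. -/
theorem intertwiner_adjoint_comp_self
    {H K : Type*} [NormedAddCommGroup H] [InnerProductSpace ℂ H] [CompleteSpace H]
    [NormedAddCommGroup K] [InnerProductSpace ℂ K] [CompleteSpace K]
    (θ : (H →L[ℂ] H) →⋆ₐ[ℂ] (K →L[ℂ] K))
    (x : H →L[ℂ] K)
    (hx : ∀ a : H →L[ℂ] H, (θ a).comp x = x.comp a) :
    (ContinuousLinearMap.adjoint x).comp x
      = ((‖x‖ ^ 2 : ℝ) : ℂ) • ContinuousLinearMap.id ℂ H := by
  rcases subsingleton_or_nontrivial H with hH | hH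
  · ext u
    exact Subsingleton.elim _ _
  obtain ⟨v, hv⟩ := exists_norm_eq H zero_le_one
  have hscalar : (ContinuousLinearMap.adjoint x).comp x
      = ((‖x v‖ ^ 2 : ℝ) : ℂ) • ContinuousLinearMap.id ℂ H := by
    ext u
    have h := congrArg (fun f : H →L[ℂ] H => f v)
      (adjoint_comp_self_commute_of_intertwiner θ x hx (InnerProductSpace.rankOne ℂ u v))
    simpa [ContinuousLinearMap.adjoint_inner_right, inner_self_eq_norm_sq_to_K, hv] using h
  have hnorm : ‖x‖ ^ 2 = ‖x v‖ ^ 2 := by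
    have h := ContinuousLinearMap.norm_adjoint_comp_self x
    rw [hscalar, norm_smul, ContinuousLinearMap.norm_id, mul_one, Complex.norm_real,
      Real.norm_of_nonneg (sq_nonneg _)] at h
    rw [h, sq]
  rw [hscalar, hnorm]
end

section
/- Let ω ∈ H be a unit vector and let k ∈ K satisfy θ(ω ω*) k = k. Then the map x_k : H → K defined by x_k(h) = θ(h ω*) k is a bounded linear operator satisfying ‖x_k h‖ = ‖h‖·‖k‖ for all h ∈ H; it is an intertwiner for θ (θ(a) ∘ x_k = x_k ∘ a for all a ∈ B(H)); and x_k(ω) = k. (Hence x ↦ x ω maps the intertwiner space 𝔥^A onto 𝔥^B = θ(ωω*)K.) -/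
/-!
The operator `h ω*` depends linearly on `h` and satisfies `a (h ω*) = (a h) ω*`, so applying the
homomorphism `θ` and evaluating at `k` gives linearity and the intertwining relation. The norm
identity comes from `(h ω*)* (h ω*) = ‖h‖² ω ω*`: since `θ` preserves adjoints and products and
`θ(ω ω*) k = k`, this yields `‖θ(h ω*) k‖² = ⟪k, ‖h‖² θ(ω ω*) k⟫ = ‖h‖² ‖k‖²`, which in
particular bounds `x_k`; no separate continuity property of `θ` is needed.
-/

/-- The rank-one operator `h g* : f ↦ ⟪g, f⟫ h` (inner product conjugate-linear in the
first variable). -/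
noncomputable def rankOne {H : Type*} [NormedAddCommGroup H] [InnerProductSpace ℂ H]
    (h g : H) : H →L[ℂ] H :=
  (ContinuousLinearMap.toSpanSingleton ℂ h).comp (innerSL ℂ g)

theorem mul_rankOne {H : Type*} [NormedAddCommGroup H] [InnerProductSpace ℂ H]
    (a : H →L[ℂ] H) (h g : H) : a * rankOne h g = rankOne (a h) g := by
  ext f
  simp [rankOne]

theorem star_rankOne_mul_self {H : Type*} [NormedAddCommGroup H] [InnerProductSpace ℂ H]
    [CompleteSpace H] (h g : H) :
    star (rankOne h g) * rankOne h g = ((‖h‖ : ℂ) ^ 2) • rankOne g g := by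
  have hs : star (rankOne h g) = rankOne g h := InnerProductSpace.adjoint_rankOne h g
  rw [hs, mul_rankOne]
  ext f
  simp [rankOne, smul_smul, mul_comm]

theorem norm_map_rankOne_apply {H K : Type*} [NormedAddCommGroup H] [InnerProductSpace ℂ H]
    [CompleteSpace H] [NormedAddCommGroup K] [InnerProductSpace ℂ K] [CompleteSpace K]
    (θ : (H →L[ℂ] H) →⋆ₐ[ℂ] (K →L[ℂ] K)) (ω : H) (k : K) (hk : θ (rankOne ω ω) k = k) (h : H) :
    ‖θ (rankOne h ω) k‖ = ‖h‖ * ‖k‖ := by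
  have key : inner ℂ (θ (rankOne h ω) k) (θ (rankOne h ω) k) = ((‖h‖ : ℂ) ^ 2) * inner ℂ k k := by
    rw [← ContinuousLinearMap.adjoint_inner_right, ← ContinuousLinearMap.star_eq_adjoint,
      ← map_star, ← mul_apply_eq_comp, ← map_mul, star_rankOne_mul_self, map_smul,
      smul_apply, hk, inner_smul_right]
  rw [inner_self_eq_norm_sq_to_K, inner_self_eq_norm_sq_to_K] at key
  -- Restates the `RCLike` coercions from `ℝ` as the complex ones.
  change (‖θ (rankOne h ω) k‖ : ℂ) ^ 2 = (‖h‖ : ℂ) ^ 2 * (‖k‖ : ℂ) ^ 2 at key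
  rw [← mul_pow] at key
  have key' : ‖θ (rankOne h ω) k‖ ^ 2 = (‖h‖ * ‖k‖) ^ 2 := by exact_mod_cast key
  exact (sq_eq_sq₀ (norm_nonneg _) (by positivity)).mp key'

/-- For a unit vector `ω ∈ H` and `k ∈ K` with `θ(ωω*)k = k`, the map
`h ↦ θ(h ω*) k` is a bounded linear operator `x_k : H → K` with `‖x_k h‖ = ‖h‖‖k‖`, it is
an intertwiner for `θ`, and `x_k ω = k`. Hence `x ↦ x ω` maps `𝔥^A` onto `𝔥^B`. -/
theorem intertwiner_apply_unitVector_surjective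
    {H K : Type*} [NormedAddCommGroup H] [InnerProductSpace ℂ H] [CompleteSpace H]
    [NormedAddCommGroup K] [InnerProductSpace ℂ K] [CompleteSpace K]
    (θ : (H →L[ℂ] H) →⋆ₐ[ℂ] (K →L[ℂ] K))
    (ω : H) (hω : ‖ω‖ = 1)
    (k : K) (hk : θ (rankOne ω ω) k = k) :
    ∃ x : H →L[ℂ] K,
      (∀ h : H, x h = θ (rankOne h ω) k) ∧
      (∀ h : H, ‖x h‖ = ‖h‖ * ‖k‖) ∧
      (∀ a : H →L[ℂ] H, (θ a).comp x = x.comp a) ∧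
      x ω = k := by
  have hnorm := norm_map_rankOne_apply θ ω k hk
  let x₀ : H →ₗ[ℂ] K :=
    { toFun := fun h => θ (rankOne h ω) k
      map_add' := fun h₁ h₂ => by
        have e : rankOne (h₁ + h₂) ω = rankOne h₁ ω + rankOne h₂ ω := by
          ext f
          simp [rankOne]
        rw [e, map_add, add_apply]
      map_smul' := fun c h => by
        have e : rankOne (c • h) ω = c • rankOne h ω := by
          ext f
          simp [rankOne, smul_smul, mul_comm]
        rw [e, map_smul, smul_apply, RingHom.id_apply] }
  refine ⟨x₀.mkContinuous ‖k‖ fun h => ?_, fun h => rfl, hnorm, fun a => ?_, hk⟩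
  · exact (hnorm h).le.trans_eq (mul_comm _ _)
  · ext h
    change θ a (θ (rankOne h ω) k) = θ (rankOne (a h) ω) k
    rw [← mul_rankOne, map_mul, mul_apply_eq_comp]
end

section
/- The complex linear span of { xᴴ y : x, y ∈ E } equals B. (That is, the Hilbert B-module E is full: the range of its inner product spans all of B.) -/
/-!
Products `xᴴ * y` with `x, y ∈ E` are block diagonal by the zero pattern of `E`, and `B` is a linear
subspace, so the span lies in `B`. Conversely, with matrix units `e i j`, every `b ∈ B` is the sum of
`(e 1 0)ᴴ * (b 0 0 • e 1 0)` and, for `i = 1, 2`, of `(e 0 i)ᴴ * (b i 1 • e 0 1 + b i 2 • e 0 2)`.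
-/

open Matrix

/-- The complex linear span of `{xᴴ y : x, y ∈ E}` equals `B`, where
`E` is the set of 3×3 complex matrices of block pattern `(0 * *; * 0 0; * 0 0)` and
`B` is the set of block-diagonal matrices `ℂ ⊕ M₂(ℂ)`. That is, the Hilbert
`B`-module `E` is full. -/
theorem module_is_full :
    (Submodule.span ℂ
        {m : Matrix (Fin 3) (Fin 3) ℂ |
          ∃ x ∈ {x : Matrix (Fin 3) (Fin 3) ℂ |
                  x 0 0 = 0 ∧ x 1 1 = 0 ∧ x 1 2 = 0 ∧ x 2 1 = 0 ∧ x 2 2 = 0},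
          ∃ y ∈ {y : Matrix (Fin 3) (Fin 3) ℂ |
                  y 0 0 = 0 ∧ y 1 1 = 0 ∧ y 1 2 = 0 ∧ y 2 1 = 0 ∧ y 2 2 = 0},
            m = xᴴ * y} : Set (Matrix (Fin 3) (Fin 3) ℂ))
      = {b : Matrix (Fin 3) (Fin 3) ℂ |
          b 0 1 = 0 ∧ b 0 2 = 0 ∧ b 1 0 = 0 ∧ b 2 0 = 0} := by
  apply Set.Subset.antisymm
  · intro m hm
    induction hm using Submodule.span_induction with
    | mem m h =>
      obtain ⟨x, ⟨hx1, hx2, hx3, hx4, hx5⟩, y, ⟨hy1, hy2, hy3, hy4, hy5⟩, rfl⟩ := h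
      simp [Matrix.mul_apply, Fin.sum_univ_three, *]
    | zero => simp
    | add a b _ _ ha hb =>
      obtain ⟨ha1, ha2, ha3, ha4⟩ := ha
      obtain ⟨hb1, hb2, hb3, hb4⟩ := hb
      simp [*]
    | smul c a _ ha =>
      obtain ⟨ha1, ha2, ha3, ha4⟩ := ha
      simp [*]
  · rintro b ⟨h1, h2, h3, h4⟩
    -- The three summands carry the `(0, 0)` entry, the row `1` and the row `2` of `b`.
    have key : b =
        (!![0, 0, 0; 1, 0, 0; 0, 0, 0] : Matrix (Fin 3) (Fin 3) ℂ)ᴴ *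
            !![0, 0, 0; b 0 0, 0, 0; 0, 0, 0] +
          (!![0, 1, 0; 0, 0, 0; 0, 0, 0] : Matrix (Fin 3) (Fin 3) ℂ)ᴴ *
            !![0, b 1 1, b 1 2; 0, 0, 0; 0, 0, 0] +
          (!![0, 0, 1; 0, 0, 0; 0, 0, 0] : Matrix (Fin 3) (Fin 3) ℂ)ᴴ *
            !![0, b 2 1, b 2 2; 0, 0, 0; 0, 0, 0] := by
      ext i j
      fin_cases i <;> fin_cases j <;>
        simp [Matrix.mul_apply, Fin.sum_univ_three, h1, h2, h3, h4]
    rw [key]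
    refine Submodule.add_mem _ (Submodule.add_mem _ ?_ ?_) ?_ <;>
      exact Submodule.subset_span ⟨_, by simp, _, by simp, rfl⟩
end
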